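/- Let k be a commutative ring, q ∈ k, A a unital associative k-algebra and x, y ∈ A. Then for all integers 1 ≤ k ≤ n, the partial q-Bell differential polynomials satisfy B_{n,k} = Σ_{ℓ=k−1}^{n−1} binom(n−1,ℓ)_q · B_{ℓ,k−1} · y^{(n−1−ℓ)}. -/

import Mathlib

/-- The q-integer `(m)_q = 1 + q + ⋯ + q^{m−1}`. -/
def qInt {k : Type*} [CommRing k] (q : k) (m : ℕ) : k := ∑ i ∈ Finset.range m, q ^ i

/-- The q-factorial `(m)_q! = (1)_q (2)_q ⋯ (m)_q`. -/
def qFact {k : Type*} [CommRing k] (q : k) : ℕ → k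
  | 0 => 1
  | m + 1 => qFact q m * qInt q (m + 1)

/-- The Gaussian binomial coefficients: `binom(n,0)_q = 1`, `binom(0,k+1)_q = 0`,
`binom(n,k)_q = binom(n−1,k−1)_q + q^k binom(n−1,k)_q`. -/
def qBinom {k : Type*} [CommRing k] (q : k) : ℕ → ℕ → k
  | _, 0 => 1
  | 0, _ + 1 => 0
  | n + 1, m + 1 => qBinom q n m + q ^ (m + 1) * qBinom q n (m + 1)

/-- The partial q-Bell differential polynomials `B_{n,k}`. -/
def qBellP {k A : Type*} [CommRing k] [Ring A] [Algebra k A] (q : k) (x y : A) :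
    ℕ → ℕ → A
  | 0, 0 => 1
  | _ + 1, 0 => 0
  | 0, _ + 1 => 0
  | n + 1, m + 1 =>
      y * qBellP q x y n m + x * qBellP q x y n (m + 1)
        - q ^ n • (qBellP q x y n (m + 1) * x)

/-- `y^{(0)} = y`, `y^{(m)} = x·y^{(m−1)} − q^m·y^{(m−1)}·x`. -/
def yd {k A : Type*} [CommRing k] [Ring A] [Algebra k A] (q : k) (x y : A) : ℕ → A
  | 0 => y
  | m + 1 => x * yd q x y m - q ^ (m + 1) • (yd q x y m * x)

/-!
With `D c u = x * u - c • (u * x)`, both recursions are driven by `D`: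
`B_{n+1,m+1} = y * B_{n,m} + D (q^n) B_{n,m+1}` and `y^{(j+1)} = D (q^{j+1}) y^{(j)}`.
Since `D` obeys the twisted Leibniz rule `D (a * b) (u * v) = D a u * v + a • (u * D b v)`,
induction on `n` applies `D (q^i * q^{j+1})` to each summand `B_{i,m} * y^{(j)}`. This raises either
`i` or, with a factor `q^i`, `j`, and the q-Pascal rule collects the result.
-/

open Finset

section QBinom

variable {k : Type*} [CommRing k] (q : k)

theorem qBinom_zero_right (n : ℕ) : qBinom q n 0 = 1 := by
  cases n <;> rfl

theorem qBinom_eq_zero_of_lt : ∀ {n i : ℕ}, n < i → qBinom q n i = 0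
  | 0, _ + 1, _ => rfl
  | n + 1, i + 1, h => by
    rw [qBinom, qBinom_eq_zero_of_lt (Nat.lt_of_succ_lt_succ h),
      qBinom_eq_zero_of_lt (Nat.lt_of_succ_lt h), mul_zero, add_zero]

theorem sum_antidiagonal_qBinom_succ_smul {M : Type*} [AddCommMonoid M] [Module k M]
    (f : ℕ → ℕ → M) (n : ℕ) :
    ∑ p ∈ antidiagonal (n + 1), qBinom q (n + 1) p.1 • f p.1 p.2 =
      ∑ p ∈ antidiagonal n, qBinom q n p.1 • (f (p.1 + 1) p.2 + q ^ p.1 • f p.1 (p.2 + 1)) := by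
  have reindex :
      f 0 (n + 1) + ∑ p ∈ antidiagonal n,
          (q ^ (p.1 + 1) * qBinom q n (p.1 + 1)) • f (p.1 + 1) p.2 =
        ∑ p ∈ antidiagonal n, (q ^ p.1 * qBinom q n p.1) • f p.1 (p.2 + 1) := by
    -- Both sides are the sum of `(q ^ i * qBinom q n i) • f i j` over `i + j = n + 1`.
    have split := (Nat.sum_antidiagonal_succ (n := n)
      (f := fun p ↦ (q ^ p.1 * qBinom q n p.1) • f p.1 p.2)).symm.trans Nat.sum_antidiagonal_succ'
    simpa only [pow_zero, one_mul, qBinom_zero_right, one_smul,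
      qBinom_eq_zero_of_lt q n.lt_succ_self, mul_zero, zero_smul, zero_add] using split
  simp only [Nat.sum_antidiagonal_succ, one_smul, qBinom, add_smul, sum_add_distrib, smul_add,
    smul_smul, mul_comm (qBinom q n _) (q ^ _)]
  rw [add_left_comm, reindex]

end QBinom

section SkewCommutator

variable {k A : Type*} [CommRing k] [Ring A] [Algebra k A]

/-- The skew commutator `u ↦ x * u - c • (u * x)`, the twisted derivation by which both `qBellP`
and `yd` are built. It is linear in `u`; the twist `c` varies from step to step. -/
def skewCommutator (c : k) (x : A) : A →ₗ[k] A :=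
  LinearMap.mulLeft k x - c • LinearMap.mulRight k x

theorem skewCommutator_apply (c : k) (x u : A) :
    skewCommutator c x u = x * u - c • (u * x) :=
  rfl

theorem skewCommutator_one_one (x : A) : skewCommutator (1 : k) x 1 = 0 := by
  rw [skewCommutator_apply, mul_one, one_mul, one_smul, sub_self]

theorem skewCommutator_mul (a b : k) (x u v : A) :
    skewCommutator (a * b) x (u * v) =
      skewCommutator a x u * v + a • (u * skewCommutator b x v) := by
  simp only [skewCommutator_apply, sub_mul, mul_sub, smul_sub, smul_mul_assoc, mul_smul_comm,
    mul_smul, mul_assoc]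
  abel

end SkewCommutator

section QBell

variable {k A : Type*} [CommRing k] [Ring A] [Algebra k A] (q : k) (x y : A)

theorem yd_succ (j : ℕ) : yd q x y (j + 1) = skewCommutator (q ^ (j + 1)) x (yd q x y j) :=
  rfl

theorem qBellP_succ_succ (n m : ℕ) :
    qBellP q x y (n + 1) (m + 1) =
      y * qBellP q x y n m + skewCommutator (q ^ n) x (qBellP q x y n (m + 1)) :=
  add_sub_assoc _ _ _

theorem skewCommutator_qBellP_zero_right (n : ℕ) :
    skewCommutator (q ^ n) x (qBellP q x y n 0) = 0 := by
  cases n with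
  | zero => rw [pow_zero, qBellP, skewCommutator_one_one]
  | succ n => rw [qBellP, map_zero]

theorem qBellP_eq_zero_of_lt : ∀ {n m : ℕ}, n < m → qBellP q x y n m = 0
  | 0, _ + 1, _ => rfl
  | n + 1, m + 1, h => by
    rw [qBellP_succ_succ, qBellP_eq_zero_of_lt (Nat.lt_of_succ_lt_succ h),
      qBellP_eq_zero_of_lt (Nat.lt_of_succ_lt h), mul_zero, map_zero, add_zero]

theorem skewCommutator_qBellP_mul_yd (i j m : ℕ) :
    skewCommutator (q ^ (i + j + 1)) x (qBellP q x y i m * yd q x y j) =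
      skewCommutator (q ^ i) x (qBellP q x y i m) * yd q x y j +
        q ^ i • (qBellP q x y i m * yd q x y (j + 1)) := by
  rw [add_assoc, pow_add, skewCommutator_mul, yd_succ]

theorem qBellP_succ_succ_eq_sum_antidiagonal (n m : ℕ) :
    qBellP q x y (n + 1) (m + 1) =
      ∑ p ∈ antidiagonal n, qBinom q n p.1 • (qBellP q x y p.1 m * yd q x y p.2) := by
  induction n generalizing m with
  | zero => cases m <;> simp [qBellP, qBinom, yd]
  | succ n ih =>
    have raise_bell :
        y * qBellP q x y (n + 1) m + ∑ p ∈ antidiagonal n,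
            qBinom q n p.1 • (skewCommutator (q ^ p.1) x (qBellP q x y p.1 m) * yd q x y p.2) =
          ∑ p ∈ antidiagonal n, qBinom q n p.1 • (qBellP q x y (p.1 + 1) m * yd q x y p.2) := by
      cases m with
      | zero => simp [skewCommutator_qBellP_zero_right, qBellP]
      | succ m =>
        simp only [ih, mul_sum, ← sum_add_distrib, qBellP_succ_succ, add_mul, smul_add,
          mul_smul_comm, mul_assoc]
    have leibniz :
        skewCommutator (q ^ (n + 1)) x (qBellP q x y (n + 1) (m + 1)) =
          ∑ p ∈ antidiagonal n, qBinom q n p.1 •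
            (skewCommutator (q ^ p.1) x (qBellP q x y p.1 m) * yd q x y p.2 +
              q ^ p.1 • (qBellP q x y p.1 m * yd q x y (p.2 + 1))) := by
      rw [ih, map_sum]
      refine sum_congr rfl fun p hp ↦ ?_
      rw [map_smul, ← mem_antidiagonal.mp hp, skewCommutator_qBellP_mul_yd]
    rw [qBellP_succ_succ, leibniz,
      sum_antidiagonal_qBinom_succ_smul q fun i j ↦ qBellP q x y i m * yd q x y j]
    simp only [smul_add, sum_add_distrib]
    rw [← add_assoc, raise_bell]

end QBell

/-- Recursion for the partial q-Bell differential polynomials: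
`B_{n,k} = Σ_{ℓ=k−1}^{n−1} binom(n−1,ℓ)_q · B_{ℓ,k−1} · y^{(n−1−ℓ)}`. -/
theorem stmt_13 {k A : Type*} [CommRing k] [Ring A] [Algebra k A]
    (q : k) (x y : A) (n m : ℕ) (h1 : 1 ≤ m) (h2 : m ≤ n) :
    qBellP q x y n m =
      ∑ ℓ ∈ Finset.Icc (m - 1) (n - 1),
        qBinom q (n - 1) ℓ • (qBellP q x y ℓ (m - 1) * yd q x y (n - 1 - ℓ)) := by
  obtain ⟨m, rfl⟩ := Nat.exists_eq_add_of_le' h1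
  obtain ⟨n, rfl⟩ := Nat.exists_eq_add_of_le' (h1.trans h2)
  simp only [Nat.add_sub_cancel]
  rw [qBellP_succ_succ_eq_sum_antidiagonal, Nat.sum_antidiagonal_eq_sum_range_succ_mk]
  refine (sum_subset (fun ℓ hℓ ↦ ?_) fun ℓ hℓ hℓ' ↦ ?_).symm
  · exact mem_range_succ_iff.mpr (mem_Icc.mp hℓ).2
  · have hlt : ℓ < m := by
      simp only [mem_range, mem_Icc] at hℓ hℓ'
      lia
    rw [qBellP_eq_zero_of_lt q x y hlt, zero_mul, smul_zero]
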